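/- Let d ∈ ℕ and let S_d be an order 2 digital (t,d)-sequence over 𝔽_2 whose generating matrices E_i = (e_{i,k,ℓ})_{k,ℓ≥1} satisfy e_{i,k,ℓ} = 0 for all k > 2ℓ and all i ∈ {1,…,d}. Then there is a constant C_d > 0 depending only on d such that ‖D_{S_d}^N | bmo^d‖ ≤ C_d · 2^t · N^{−1} (log N)^{d/2} for all integers N ≥ 2. -/

import Mathlib

open MeasureTheory
open scoped ENNReal

noncomputable section

/-- The closed unit cube `[0,1]^d`. -/
def unitCube (d : ℕ) : Set (Fin d → ℝ) := Set.univ.pi fun _ => Set.Icc (0:ℝ) 1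

/-- The half-open unit cube `[0,1)^d`. -/
def unitCubeIco (d : ℕ) : Set (Fin d → ℝ) := Set.univ.pi fun _ => Set.Ico (0:ℝ) 1

/-- Discrepancy function of the first `N` points of the sequence `S` in `[0,1)^d`. -/
def discSeq (d : ℕ) (S : ℕ → Fin d → ℝ) (N : ℕ) (x : Fin d → ℝ) : ℝ :=
  (Nat.card {k : Fin N // ∀ i, S k i < x i} : ℝ) / N - ∏ i, x i

/-- One-dimensional Haar function `h_{j,m}`, with `h_{-1,0} = 1_{[0,1)}`. -/
def haar1 (j : ℤ) (m : ℕ) (x : ℝ) : ℝ :=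
  if j = -1 then (if 0 ≤ x ∧ x < 1 then 1 else 0)
  else if (m:ℝ)/2^j.toNat ≤ x ∧ x < ((m:ℝ) + 1/2)/2^j.toNat then 1
  else if ((m:ℝ) + 1/2)/2^j.toNat ≤ x ∧ x < ((m:ℝ)+1)/2^j.toNat then -1
  else 0

/-- `d`-dimensional (tensor product) Haar function. -/
def haarFn (d : ℕ) (j : Fin d → ℤ) (m : Fin d → ℕ) (x : Fin d → ℝ) : ℝ :=
  ∏ i, haar1 (j i) (m i) (x i)

/-- Haar coefficient `⟨f, h_{j,m}⟩`. -/
def haarCoeff (d : ℕ) (f : (Fin d → ℝ) → ℝ) (j : Fin d → ℤ) (m : Fin d → ℕ) : ℝ :=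
  ∫ x in unitCube d, f x * haarFn d j m x

/-- `|j| = max(j₁,0) + ⋯ + max(j_d,0)`. -/
def jnorm (d : ℕ) (j : Fin d → ℤ) : ℕ := ∑ i, (j i).toNat

/-- One-dimensional dyadic interval `I_{j,m}`. -/
def dyadicI (j : ℤ) (m : ℕ) : Set ℝ :=
  Set.Ico ((m:ℝ)/2^j.toNat) (((m:ℝ)+1)/2^j.toNat)

/-- `d`-dimensional dyadic box `I_{j,m}`. -/
def dyadicBox (d : ℕ) (j : Fin d → ℤ) (m : Fin d → ℕ) : Set (Fin d → ℝ) :=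
  Set.univ.pi fun i => dyadicI (j i) (m i)

/-- The index set `𝔻_j` as a finset. -/
def Dfin (d : ℕ) (j : Fin d → ℤ) : Finset (Fin d → ℕ) :=
  Fintype.piFinset fun i => Finset.range (2 ^ (j i).toNat)

/-- The index set `𝔻_j` for `j ∈ ℕ₀^d`. -/
def Dfin0 (d : ℕ) (j : Fin d → ℕ) : Finset (Fin d → ℕ) :=
  Fintype.piFinset fun i => Finset.range (2 ^ (j i))

/-- Coordinate of the `k`-th point of a digital sequence over `𝔽₂` with generating
matrix `C` (`0`-based rows and columns). -/
def digitalCoord (C : ℕ → ℕ → ZMod 2) (k : ℕ) : ℝ :=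
  ∑' i : ℕ,
    (((∑ ℓ ∈ Finset.range (k+1), C i ℓ * (if k.testBit ℓ then 1 else 0)).val : ℕ) : ℝ) / 2 ^ (i + 1)

/-- The digital sequence over `𝔽₂` generated by matrices `C 0, …, C (d-1)`. -/
def digitalSeq (d : ℕ) (C : Fin d → ℕ → ℕ → ZMod 2) : ℕ → Fin d → ℝ :=
  fun k j => digitalCoord (C j) k

/-- `C 0, …, C (d-1)` generate an order `α` digital `(t,n,d)`-net over `𝔽₂`,
where the relevant submatrices have `q` rows (`q ≥ αn`) and `n` columns.
Row indices are `0`-based; the `1`-based row value of row `r` is `r+1`. -/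
def IsOrderNet (α n t q d : ℕ) (C : Fin d → ℕ → ℕ → ZMod 2) : Prop :=
  ∀ (ν : Fin d → ℕ) (r : ∀ j : Fin d, Fin (ν j) → ℕ),
    (∀ j, StrictAnti (r j)) →
    (∀ j l, r j l < q) →
    (∑ j, ∑ l ∈ Finset.univ.filter (fun l : Fin (ν j) => (l:ℕ) < α), (r j l + 1)) ≤ α * n - t →
    LinearIndependent (ZMod 2)
      (fun p : Σ j : Fin d, Fin (ν j) => fun col : Fin n => C p.1 (r p.1 p.2) col)

/-- `C 0, …, C (d-1)` generate an order `α` digital `(t,d)`-sequence over `𝔽₂`. -/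
def IsOrderSeq (α t d : ℕ) (C : Fin d → ℕ → ℕ → ZMod 2) : Prop :=
  ∀ n : ℕ, t < α * n → IsOrderNet α n t (α * n) d C

/-- The condition `e_{i,k,ℓ} = 0` for all `k > 2ℓ` (in `1`-based indexing). -/
def Triangular2 (d : ℕ) (E : Fin d → ℕ → ℕ → ZMod 2) : Prop :=
  ∀ i k ℓ, 2 * (ℓ + 1) < k + 1 → E i k ℓ = 0

open scoped Classical in
/-- The quantity `λ(U)⁻¹ ∑_{j ∈ ℕ₀^d} 2^{|j|} ∑_{m : I_{j,m} ⊆ U} ⟨f,h_{j,m}⟩²`. -/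
def bmoSq (d : ℕ) (f : (Fin d → ℝ) → ℝ) (U : Set (Fin d → ℝ)) : ℝ≥0∞ :=
  (volume U)⁻¹ * ∑' j : Fin d → ℕ, ∑ m ∈ Dfin0 d j,
    if dyadicBox d (fun i => (j i : ℤ)) m ⊆ U then
      (2:ℝ≥0∞) ^ (∑ i, j i) * ENNReal.ofReal ((haarCoeff d f (fun i => (j i : ℤ)) m)^2)
    else 0

/-- The BMO (semi-)norm `‖f | bmo^d‖`. -/
def bmoNorm (d : ℕ) (f : (Fin d → ℝ) → ℝ) : ℝ≥0∞ :=
  (⨆ U : {U : Set (Fin d → ℝ) // MeasurableSet U ∧ U ⊆ unitCubeIco d ∧ 0 < volume U},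
    bmoSq d f U.1) ^ (1/2 : ℝ)

/-- The Orlicz norm of `f` on `[0,1)^d` with respect to the Young function `ψ`,
with the convention `inf ∅ = ∞`. -/
def orliczNorm (d : ℕ) (ψ : ℝ → ℝ) (f : (Fin d → ℝ) → ℝ) : ℝ≥0∞ :=
  ⨅ K : {K : ℝ // 0 < K ∧ ∫ x in unitCubeIco d, ψ (|f x| / K) ≤ 1}, ENNReal.ofReal K.1

/-- `ψ` is a Young function which coincides with `exp(x^β) - 1` for all large `x`. -/
def IsYoungExp (β : ℝ) (ψ : ℝ → ℝ) : Prop :=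
  ConvexOn ℝ (Set.Ici 0) ψ ∧ ψ 0 = 0 ∧ (∀ x : ℝ, 0 < x → 0 < ψ x) ∧
    ∃ x₀ : ℝ, ∀ x ≥ x₀, ψ x = Real.exp (x ^ β) - 1

/-- The set of valid Haar indices `j ∈ ℕ_{-1}^d`. -/
def validJ (d : ℕ) : Set (Fin d → ℤ) := {j | ∀ i, -1 ≤ j i}

/-- The `q`-th power of the Haar-characterization of the `S^s_{p,q}B` norm:
`∑_{j ∈ ℕ_{-1}^d} 2^{|j|(s-1/p+1)q} (∑_{m ∈ 𝔻_j} |⟨f,h_{j,m}⟩|^p)^{q/p}`. -/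
def besovSum (d : ℕ) (p q s : ℝ) (f : (Fin d → ℝ) → ℝ) : ℝ≥0∞ :=
  ∑' j : validJ d,
    ENNReal.ofReal ((2:ℝ) ^ ((jnorm d j.1 : ℝ) * (s - 1/p + 1) * q) *
      (∑ m ∈ Dfin d j.1, |haarCoeff d f j.1 m| ^ p) ^ (q / p))

/-- Coordinate of the `k`-th point of a digital net with `q × n` generating matrix `C`. -/
def netCoord (q n : ℕ) (C : ℕ → ℕ → ZMod 2) (k : ℕ) : ℝ :=
  ∑ i ∈ Finset.range q,
    ((∑ ℓ ∈ Finset.range n, C i ℓ * (if k.testBit ℓ then 1 else 0)).val : ℝ) / 2 ^ (i + 1)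

/-- `n_{μ+1}`, with the convention `n_{r+1} = log₂ N` (indices `1`-based, `n` stored `0`-based). -/
def nExt (r : ℕ) (n : Fin r → ℕ) (N : ℕ) (μ : ℕ) : ℝ :=
  if h : μ < r then (n ⟨μ, h⟩ : ℝ) else Real.logb 2 N

/-- `n_μ`, with the convention `n_0 = 0` (indices `1`-based, `n` stored `0`-based). -/
def nPrev (r : ℕ) (n : Fin r → ℕ) (μ : ℕ) : ℝ :=
  if h : 1 ≤ μ ∧ μ ≤ r then (n ⟨μ - 1, by omega⟩ : ℝ) else 0

/-- The dyadic square function `Sf`, valued in `ℝ≥0∞`. -/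
def sqFnE (d : ℕ) (f : (Fin d → ℝ) → ℝ) (x : Fin d → ℝ) : ℝ≥0∞ :=
  (∑' j : validJ d, ∑ m ∈ Dfin d j.1,
    ENNReal.ofReal ((2:ℝ) ^ (2 * jnorm d j.1) * (haarCoeff d f j.1 m)^2 *
      (dyadicBox d j.1 m).indicator (fun _ => (1:ℝ)) x)) ^ (1/2 : ℝ)

/-- `sup_{p > 1} p^{-1/β} ‖f‖_{L_p([0,1]^d)}`. -/
def supLp (d : ℕ) (β : ℝ) (f : (Fin d → ℝ) → ℝ) : ℝ≥0∞ :=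
  ⨆ p : {p : ℝ // 1 < p},
    ENNReal.ofReal ((p:ℝ) ^ (-(1/β))) * eLpNorm f (ENNReal.ofReal (p:ℝ)) (volume.restrict (unitCube d))

/-- `‖f | 𝒟₀^d‖² = ∑_{j ∈ ℕ₀^d} 2^{|j|} ∑_{m ∈ 𝔻_j} ⟨f,h_{j,m}⟩²`. -/
def dNormSq (d : ℕ) (f : (Fin d → ℝ) → ℝ) : ℝ≥0∞ :=
  ∑' j : Fin d → ℕ, ∑ m ∈ Dfin0 d j,
    ENNReal.ofReal ((2:ℝ) ^ (∑ i, j i) * (haarCoeff d f (fun i => (j i : ℤ)) m)^2)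

/-- `‖f | 𝒟₀^d‖`. -/
def dNorm (d : ℕ) (f : (Fin d → ℝ) → ℝ) : ℝ≥0∞ := (dNormSq d f) ^ (1/2 : ℝ)

/-!
Up to sign, the Haar coefficient of `D_S^N` at level `j` is `2 ^ (-|j|) / N` times the sum, over
the first `N` points, of a tensor product of tents supported on the dyadic box, minus its mean.
A tent has a sparse Walsh expansion: its digits enter only through the leading one and at most
one further digit. An order `2` net therefore annihilates all Walsh functions of small weight when
summed over a block of `2 ^ n` consecutive indices, and Rankin's trick bounds the contribution of
the remaining ones by a quantity decaying geometrically in `n - |j|`. Cutting an initial segment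
into dyadic blocks gives a bound `O_d(2 ^ t)` for the sum, uniformly in `N`, the level and the box.

If `N ≤ 2 ^ n` and `2 * n ≤ j i` for some `i`, the triangular shape of the matrices puts the points
on the grid of level `j i`, where the tents vanish, so only the mean contributes. Boxes of one
level are disjoint, hence those inside `U` have total volume at most that of `U`, and it remains to
sum over the levels: the `(2 * n) ^ d` levels with all `j i < 2 * n` contribute `O_d(4 ^ t / N ^ 2)`
each, the others a geometric series of total size `O_d(1 / N ^ 2)`.
-/

/-! ## Products of series -/

lemma hasSum_prod_mul {κ μ : Type*} {f : κ → ℝ} {g : μ → ℝ} {s t : ℝ} (hf : HasSum f s)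
    (hg : HasSum g t) : HasSum (fun x : κ × μ => f x.1 * g x.2) (s * t) :=
  hf.mul hg (summable_mul_of_summable_norm hf.summable.norm hg.summable.norm)

lemma hasSum_pi_prod {d : ℕ} {κ : Fin d → Type*} {f : ∀ i, κ i → ℝ} {s : Fin d → ℝ}
    (hf : ∀ i, HasSum (f i) (s i)) :
    HasSum (fun α : ∀ i, κ i => ∏ i, f i (α i)) (∏ i, s i) := by
  induction d with
  | zero => simp
  | succ d ih =>
    have hprod := hasSum_prod_mul (hf 0) (ih fun i : Fin d => hf i.succ)
    rw [Fin.prod_univ_succ s, ← (Fin.consEquiv κ).hasSum_iff]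
    simpa [Function.comp_def, Fin.prod_univ_succ] using hprod

/-! ## Binary digits and the tent function -/

/-- The nontrivial character `(-1) ^ b` of `𝔽₂`, with real values. -/
def binarySign : AddChar (ZMod 2) ℝ :=
  AddChar.zmodChar 2 (ζ := -1) (by norm_num)

lemma binarySign_eq_one_sub (b : ZMod 2) : binarySign b = 1 - 2 * (b.val : ℝ) := by
  rw [binarySign, AddChar.zmodChar_apply]
  fin_cases b <;> norm_num [ZMod.val]

lemma binarySign_one : binarySign 1 = -1 := by
  norm_num [binarySign_eq_one_sub, ZMod.val_one]

lemma abs_binarySign (b : ZMod 2) : |binarySign b| = 1 := by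
  simp [binarySign, AddChar.zmodChar_apply]

/-- The real number `0.y₀y₁y₂…` in base `2`. -/
def binaryFraction (y : ℕ → ZMod 2) : ℝ :=
  ∑' r, ((y r).val : ℝ) / 2 ^ (r + 1)

lemma binaryFraction_eq_ofDigits (y : ℕ → ZMod 2) :
    binaryFraction y = Real.ofDigits (b := 2) fun r => ⟨(y r).val, ZMod.val_lt _⟩ := by
  simp [binaryFraction, Real.ofDigits, Real.ofDigitsTerm, div_eq_mul_inv]

lemma binaryFraction_mem_Icc (y : ℕ → ZMod 2) : binaryFraction y ∈ Set.Icc (0 : ℝ) 1 := by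
  rw [binaryFraction_eq_ofDigits]
  exact ⟨Real.ofDigits_nonneg _, Real.ofDigits_le_one _⟩

lemma hasSum_binaryFraction (y : ℕ → ZMod 2) :
    HasSum (fun r => ((y r).val : ℝ) / 2 ^ (r + 1)) (binaryFraction y) := by
  refine Summable.hasSum (.of_nonneg_of_le (fun r => by positivity) (fun r => ?_)
    ((summable_nat_add_iff 1).2 summable_geometric_two))
  rw [one_div_pow]
  gcongr
  exact_mod_cast Nat.le_of_lt_succ (ZMod.val_lt (y r))

lemma binaryFraction_zero : binaryFraction 0 = 0 := by
  simp [binaryFraction]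

lemma two_mul_binaryFraction (y : ℕ → ZMod 2) :
    2 * binaryFraction y = (y 0).val + binaryFraction fun r => y (r + 1) := by
  rw [binaryFraction, (hasSum_binaryFraction y).summable.tsum_eq_zero_add, mul_add,
    ← tsum_mul_left, binaryFraction]
  congr 1
  · rw [zero_add, pow_one, mul_div_cancel₀ _ two_ne_zero]
  · refine tsum_congr fun r => ?_
    rw [pow_succ _ (r + 1)]
    field_simp

/-- The integer with binary expansion `y₀y₁…y_{j-1}`, most significant digit first. -/
def leadingNat (y : ℕ → ZMod 2) : ℕ → ℕ
  | 0 => 0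
  | j + 1 => 2 * leadingNat y j + (y j).val

lemma two_pow_mul_binaryFraction (y : ℕ → ZMod 2) (j : ℕ) :
    2 ^ j * binaryFraction y = leadingNat y j + binaryFraction fun r => y (j + r) := by
  induction j with
  | zero => simp [leadingNat]
  | succ j ih =>
    have hshift := two_mul_binaryFraction fun r => y (j + r)
    simp only [add_zero, ← add_assoc, add_right_comm j _ 1] at hshift
    rw [leadingNat]
    push_cast
    linear_combination 2 * ih + hshift

lemma leadingNat_eq_iff (y β : ℕ → ZMod 2) (j : ℕ) :
    leadingNat y j = leadingNat β j ↔ ∀ r < j, y r = β r := by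
  induction j with
  | zero => simp [leadingNat]
  | succ j ih =>
    have hy := ZMod.val_lt (y j)
    have hβ := ZMod.val_lt (β j)
    rw [Nat.forall_lt_succ_right, ← ih, ← (ZMod.val_injective 2).eq_iff, leadingNat, leadingNat]
    omega

lemma exists_leadingNat_eq (j : ℕ) {m : ℕ} (hm : m < 2 ^ j) :
    ∃ β : ℕ → ZMod 2, leadingNat β j = m := by
  induction j generalizing m with
  | zero => exact ⟨0, by simp_all [leadingNat]⟩
  | succ j ih =>
    obtain ⟨β, hβ⟩ := ih (m := m / 2) (by omega)
    refine ⟨Function.update β j (m : ZMod 2), ?_⟩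
    have hlead : leadingNat (Function.update β j (m : ZMod 2)) j = m / 2 := by
      rw [← hβ, leadingNat_eq_iff]
      exact fun r hr => Function.update_of_ne hr.ne _ _
    rw [leadingNat, hlead, Function.update_self, ZMod.val_natCast]
    omega

/-- The tent function: slopes `±1`, support `[0, 1]`, peak `1 / 2` at the midpoint. On its
dyadic interval, the primitive of a Haar function is a rescaled tent. -/
def tent (w : ℝ) : ℝ := max 0 (min w (1 - w))

lemma tent_nonneg (w : ℝ) : 0 ≤ tent w := le_max_left _ _

lemma tent_le_one (w : ℝ) : tent w ≤ 1 := by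
  grind [tent]

lemma tent_of_nonpos {w : ℝ} (hw : w ≤ 0) : tent w = 0 :=
  max_eq_left ((min_le_left _ _).trans hw)

lemma tent_of_one_le {w : ℝ} (hw : 1 ≤ w) : tent w = 0 :=
  max_eq_left ((min_le_right _ _).trans (sub_nonpos.2 hw))

lemma tent_natCast_sub_add {w : ℝ} (hw : w ∈ Set.Icc (0 : ℝ) 1) (a b : ℕ) :
    tent (a + w - b) = if a = b then tent w else 0 := by
  obtain ⟨hw₀, hw₁⟩ := hw
  split_ifs with hab
  · rw [hab, add_sub_cancel_left]
  · rcases Nat.lt_or_gt_of_ne hab with hlt | hgt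
    · have : (a : ℝ) + 1 ≤ b := by exact_mod_cast hlt
      exact tent_of_nonpos (by linarith)
    · have : (b : ℝ) + 1 ≤ a := by exact_mod_cast hgt
      exact tent_of_one_le (by linarith)

lemma tent_two_pow_mul_binaryFraction_sub (y β : ℕ → ZMod 2) (j : ℕ)
    [Decidable (∀ r < j, y r = β r)] :
    tent (2 ^ j * binaryFraction y - leadingNat β j) =
      if ∀ r < j, y r = β r then tent (binaryFraction fun r => y (j + r)) else 0 := by
  rw [two_pow_mul_binaryFraction, tent_natCast_sub_add (binaryFraction_mem_Icc _)]
  simp only [leadingNat_eq_iff]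

/-- The Walsh function of index `a` occurring in the expansion of the tent function: it is
constant for `a = 0` and otherwise the sign of the sum of the digits `0` and `a`. -/
def tentWalsh (y : ℕ → ZMod 2) (a : ℕ) : ℝ :=
  if a = 0 then 1 else binarySign (y 0 + y a)

/-- The Walsh coefficients of the tent function. -/
def tentCoeff (a : ℕ) : ℝ := if a = 0 then 1 / 4 else -(1 / 2) ^ (a + 2)

lemma abs_tentWalsh_le_one (y : ℕ → ZMod 2) (a : ℕ) : |tentWalsh y a| ≤ 1 := by
  unfold tentWalsh
  split_ifs <;> simp [abs_binarySign]

lemma tentWalsh_add (y z : ℕ → ZMod 2) (a : ℕ) :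
    tentWalsh (fun r => y r + z r) a = tentWalsh y a * tentWalsh z a := by
  unfold tentWalsh
  split_ifs
  · simp
  · rw [add_add_add_comm, AddChar.map_add_eq_mul]

/-- On each half of `[0, 1]` the tent function is affine, and the sign of the leading digit tells
the two halves apart. -/
lemma tent_binaryFraction_eq (y : ℕ → ZMod 2) :
    tent (binaryFraction y) =
      1 / 4 + binarySign (y 0) * ((binaryFraction fun r => y (r + 1)) / 2 - 1 / 4) := by
  have hstep := two_mul_binaryFraction y
  obtain ⟨h₀, h₁⟩ := binaryFraction_mem_Icc fun r => y (r + 1)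
  set v := binaryFraction fun r => y (r + 1)
  have hbit : (y 0).val = 0 ∨ (y 0).val = 1 := by have := ZMod.val_lt (y 0); omega
  rw [binarySign_eq_one_sub]
  rcases hbit with h | h <;> rw [h] at hstep ⊢ <;> push_cast at hstep ⊢
  · rw [tent, min_eq_left (by linarith), max_eq_right (by linarith)]
    linarith
  · rw [tent, min_eq_right (by linarith), max_eq_right (by linarith)]
    linarith

lemma hasSum_tentWalsh (y : ℕ → ZMod 2) :
    HasSum (fun a => tentCoeff a * tentWalsh y a) (tent (binaryFraction y)) := by
  have hgeom : HasSum (fun a : ℕ => (1 / 2 : ℝ) ^ (a + 3)) (1 / 4) := by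
    have h := hasSum_geometric_two.mul_right ((1 / 2 : ℝ) ^ 3)
    simp only [← pow_add] at h
    exact (by norm_num : (2 : ℝ) * (1 / 2) ^ 3 = 1 / 4) ▸ h
  have hterm (a : ℕ) : tentCoeff (a + 1) * tentWalsh y (a + 1) =
      binarySign (y 0) * (((y (a + 1)).val : ℝ) / 2 ^ (a + 1) / 2 - (1 / 2) ^ (a + 3)) := by
    rw [tentCoeff, tentWalsh, if_neg a.succ_ne_zero, if_neg a.succ_ne_zero,
      AddChar.map_add_eq_mul, binarySign_eq_one_sub (y (a + 1)), one_div_pow]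
    field_simp
    ring
  have htail := (((hasSum_binaryFraction fun r => y (r + 1)).div_const 2).sub hgeom).mul_left
    (binarySign (y 0))
  simp only [← hterm] at htail
  rw [hasSum_nat_add_iff (f := fun a => tentCoeff a * tentWalsh y a) 1] at htail
  rw [tent_binaryFraction_eq]
  simpa [tentCoeff, tentWalsh, add_comm] using htail

/-! ## Digits of digital sequences -/

/-- The `ℓ`-th binary digit of the index `k`, as an element of `𝔽₂`. -/
def indexDigit (k ℓ : ℕ) : ZMod 2 := if k.testBit ℓ then 1 else 0

lemma indexDigit_of_lt_two_pow {k L ℓ : ℕ} (hk : k < 2 ^ L) (hℓ : L ≤ ℓ) : indexDigit k ℓ = 0 := by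
  simp [indexDigit, Nat.testBit_lt_two_pow (hk.trans_le (Nat.pow_le_pow_right two_pos hℓ))]

lemma indexDigit_two_pow_mul_add {n k : ℕ} (hk : k < 2 ^ n) (a ℓ : ℕ) :
    indexDigit (2 ^ n * a + k) ℓ = indexDigit (2 ^ n * a) ℓ + indexDigit k ℓ := by
  have hblock := Nat.testBit_two_pow_mul_add a (Nat.two_pow_pos n) ℓ
  rw [add_zero, Nat.zero_testBit] at hblock
  rcases lt_or_ge ℓ n with hℓ | hℓ
  · simp [indexDigit, Nat.testBit_two_pow_mul_add a hk, hblock, hℓ]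
  · rw [indexDigit_of_lt_two_pow hk hℓ]
    simp [indexDigit, Nat.testBit_two_pow_mul_add a hk, hblock, hℓ.not_gt]

lemma bijective_indexDigit (n : ℕ) :
    Function.Bijective fun (k : Fin (2 ^ n)) (ℓ : Fin n) => indexDigit k ℓ := by
  refine (Fintype.bijective_iff_injective_and_card _).2 ⟨fun k k' h => ?_, by simp [ZMod.card]⟩
  refine Fin.ext (Nat.eq_of_testBit_eq fun ℓ => ?_)
  rcases lt_or_ge ℓ n with hℓ | hℓ
  · have hdigit := congrFun h ⟨ℓ, hℓ⟩
    simp only [indexDigit] at hdigit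
    split_ifs at hdigit <;> simp_all
  · have hpow := Nat.pow_le_pow_right two_pos hℓ
    rw [Nat.testBit_lt_two_pow (k.2.trans_le hpow), Nat.testBit_lt_two_pow (k'.2.trans_le hpow)]

lemma sum_range_two_pow_indexDigit (n : ℕ) (F : (Fin n → ZMod 2) → ℝ) :
    ∑ k ∈ Finset.range (2 ^ n), F (fun ℓ => indexDigit k ℓ) = ∑ κ, F κ := by
  rw [Finset.sum_range fun k => F fun ℓ => indexDigit k ℓ]
  exact (bijective_indexDigit n).sum_comp F

/-- The `r`-th binary digit of the `k`-th element of the one-dimensional digital sequence with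
generating matrix `C`. -/
def coordDigit (C : ℕ → ℕ → ZMod 2) (k r : ℕ) : ZMod 2 :=
  ∑ ℓ ∈ Finset.range (k + 1), C r ℓ * indexDigit k ℓ

lemma digitalSeq_apply {d : ℕ} (E : Fin d → ℕ → ℕ → ZMod 2) (k : ℕ) (i : Fin d) :
    digitalSeq d E k i = binaryFraction (coordDigit (E i) k) := rfl

lemma coordDigit_eq_sum_range (C : ℕ → ℕ → ZMod 2) {k L : ℕ} (hk : k < 2 ^ L) (r : ℕ) :
    coordDigit C k r = ∑ ℓ ∈ Finset.range L, C r ℓ * indexDigit k ℓ := by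
  have hextend {M M' : ℕ} (hM : k < 2 ^ M) (hMM' : M ≤ M') :
      ∑ ℓ ∈ Finset.range M, C r ℓ * indexDigit k ℓ =
        ∑ ℓ ∈ Finset.range M', C r ℓ * indexDigit k ℓ :=
    Finset.sum_subset (Finset.range_mono hMM') fun ℓ _ hℓ => by
      rw [indexDigit_of_lt_two_pow hM (by simpa using hℓ), mul_zero]
  have hk' : k < 2 ^ (k + 1) :=
    Nat.lt_two_pow_self.trans (Nat.pow_lt_pow_right one_lt_two k.lt_succ_self)
  rw [coordDigit, hextend hk' (le_max_left _ L), hextend hk (le_max_right (k + 1) _)]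

lemma coordDigit_two_pow_mul_add (C : ℕ → ℕ → ZMod 2) {n k : ℕ} (hk : k < 2 ^ n) (a r : ℕ) :
    coordDigit C (2 ^ n * a + k) r = coordDigit C (2 ^ n * a) r + coordDigit C k r := by
  have hlt : 2 ^ n * a + k < 2 ^ (2 ^ n * a + k) := Nat.lt_two_pow_self
  rw [coordDigit_eq_sum_range C hlt,
    coordDigit_eq_sum_range C ((Nat.le_add_right _ _).trans_lt hlt),
    coordDigit_eq_sum_range C ((Nat.le_add_left _ _).trans_lt hlt), ← Finset.sum_add_distrib]
  simp only [indexDigit_two_pow_mul_add hk, mul_add]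

lemma Triangular2.coordDigit_eq_zero {d : ℕ} {E : Fin d → ℕ → ℕ → ZMod 2} (hE : Triangular2 d E)
    (i : Fin d) {k L r : ℕ} (hk : k < 2 ^ L) (hr : 2 * L ≤ r) : coordDigit (E i) k r = 0 := by
  rw [coordDigit_eq_sum_range _ hk]
  refine Finset.sum_eq_zero fun ℓ hℓ => ?_
  rw [hE i r ℓ (by grind), zero_mul]

/-- The additive map sending the digits of an index below `2 ^ n` to the digits of the
coordinates of the corresponding point. -/
def digitMap {d : ℕ} (E : Fin d → ℕ → ℕ → ZMod 2) (n : ℕ) :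
    (Fin n → ZMod 2) →+ (Fin d → ℕ → ZMod 2) :=
  AddMonoidHom.mk' (fun κ i r => ∑ c : Fin n, E i r c * κ c) fun κ κ' => by
    ext i r
    simp [mul_add, Finset.sum_add_distrib]

/-- On a dyadic block of indices the digit arrays run through a translate of the range of
`digitMap`. -/
lemma sum_block_coordDigit {d : ℕ} (E : Fin d → ℕ → ℕ → ZMod 2) (n a : ℕ)
    (F : (Fin d → ℕ → ZMod 2) → ℝ) :
    ∑ k ∈ Finset.range (2 ^ n), F (fun i => coordDigit (E i) (2 ^ n * a + k)) =
      ∑ κ, F ((fun i => coordDigit (E i) (2 ^ n * a)) + digitMap E n κ) := by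
  rw [← sum_range_two_pow_indexDigit n fun κ =>
    F ((fun i => coordDigit (E i) (2 ^ n * a)) + digitMap E n κ)]
  refine Finset.sum_congr rfl fun k hk => congrArg F ?_
  have hk := Finset.mem_range.1 hk
  ext i r
  rw [coordDigit_two_pow_mul_add _ hk, coordDigit_eq_sum_range _ hk]
  simp [digitMap, Finset.sum_range]

/-! ## Order `2` digital nets -/

lemma exists_sum_mul_eq_of_linearIndependent {K ι κ : Type*} [Field K] [Finite ι] [Fintype κ]
    {v : ι → κ → K} (hv : LinearIndependent K v) (τ : ι → K) :
    ∃ x : κ → K, ∀ i, ∑ c, v i c * x c = τ i := by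
  have := Fintype.ofFinite ι
  have hrange : LinearMap.range (Matrix.of v).mulVecLin = ⊤ :=
    Submodule.eq_top_of_finrank_eq <|
      (LinearIndependent.rank_matrix (M := Matrix.of v) hv).trans
        (Module.finrank_fintype_fun_eq_card K).symm
  obtain ⟨x, hx⟩ := LinearMap.range_eq_top.1 hrange τ
  exact ⟨x, congrFun hx⟩

lemma card_fiber_mul_card_of_surjective {G H : Type*} [AddGroup G] [Fintype G] [AddGroup H]
    [Fintype H] [DecidableEq H] (φ : G →+ H) (hφ : Function.Surjective φ) (w : H) :
    Finset.card {g | φ g = w} * Fintype.card H = Fintype.card G := by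
  have hcard := Finset.card_eq_sum_card_fiberwise (f := φ) (s := Finset.univ) (t := Finset.univ)
    fun _ _ => Finset.mem_coe.2 (Finset.mem_univ _)
  simp only [fun w' => AddMonoidHom.card_fiber_eq_of_mem_range φ (hφ w') (hφ w), Finset.sum_const,
    Finset.card_univ, smul_eq_mul] at hcard
  rw [hcard, mul_comm]

lemma sum_first_two_le_of_strictAnti {ν p q : ℕ} {r : Fin ν → ℕ} (hr : StrictAnti r)
    (hp : ∀ l, r l < p) (hq : ∀ l l', r l < r l' → r l < q) :
    ∑ l ∈ Finset.univ.filter (fun l : Fin ν => (l : ℕ) < 2), (r l + 1) ≤ p + q := by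
  rw [Finset.sum_filter]
  rcases ν with _ | _ | ν
  · simp
  · simpa using (hp 0).trans_le (Nat.le_add_right p q)
  · have h₀ := hp 0
    have h₁ := hq 1 0 (hr (by simp))
    have hsum : ∑ l : Fin (ν + 2), (if (l : ℕ) < 2 then r l + 1 else 0) =
        (r 0 + 1) + (r 1 + 1) := by
      simp [Fin.sum_univ_succ]
    exact hsum.trans_le (by omega)

/-- In an order `2` net any set of rows can be prescribed, provided that the indices of the last
two rows chosen from each matrix, bounded here by `p` and `q`, have a small total. -/
lemma IsOrderNet.exists_digitMap_eq {t n d : ℕ} {E : Fin d → ℕ → ℕ → ZMod 2}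
    (hE : IsOrderNet 2 n t (2 * n) d E) {T : Fin d → Finset ℕ} {p q : Fin d → ℕ}
    (hp : ∀ i, ∀ r ∈ T i, r < p i) (hq : ∀ i, ∀ r ∈ T i, ∀ r' ∈ T i, r < r' → r < q i)
    (hpq : ∑ i, (p i + q i) + t ≤ 2 * n) (τ : Fin d → ℕ → ZMod 2) :
    ∃ δ, ∀ i, ∀ r ∈ T i, digitMap E n δ i r = τ i r := by
  let row (i : Fin d) (l : Fin (T i).card) : ℕ := (T i).orderEmbOfFin rfl l.rev
  have hrow_mem i l : row i l ∈ T i := Finset.orderEmbOfFin_mem _ _ _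
  have hrow_anti i : StrictAnti (row i) := fun l l' h =>
    (OrderEmbedding.lt_iff_lt _).2 (Fin.rev_lt_rev.2 h)
  have hp_le i : p i ≤ 2 * n := by
    have := Finset.single_le_sum_of_canonicallyOrdered (f := fun i => p i + q i)
      (Finset.mem_univ i)
    omega
  have hindep := hE _ row hrow_anti (fun i l => (hp i _ (hrow_mem i l)).trans_le (hp_le i)) <|
    (Finset.sum_le_sum fun i _ => sum_first_two_le_of_strictAnti (hrow_anti i)
      (fun l => hp i _ (hrow_mem i l))
      fun l l' => hq i _ (hrow_mem i l) _ (hrow_mem i l')).trans (by omega)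
  obtain ⟨δ, hδ⟩ := exists_sum_mul_eq_of_linearIndependent hindep fun x => τ x.1 (row x.1 x.2)
  refine ⟨δ, fun i r hr => ?_⟩
  obtain ⟨l, rfl⟩ : ∃ l, row i l = r := by
    have hrange := Finset.range_orderEmbOfFin (T i) rfl
    obtain ⟨l, hl⟩ := hrange.symm ▸ (Finset.mem_coe.2 hr)
    exact ⟨l.rev, by simpa [row] using hl⟩
  exact hδ ⟨i, l⟩

/-- The cost, beyond `2 * j`, of controlling the digits that enter the Walsh function of index
`a` at level `j`: it involves the rows `j` and `j + a`. -/
def tentWeight (a : ℕ) : ℕ := if a = 0 then 0 else a + 2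

lemma IsOrderNet.exists_digitMap_eq_of_tentWeight {t n d : ℕ} {E : Fin d → ℕ → ℕ → ZMod 2}
    (hE : IsOrderNet 2 n t (2 * n) d E) {j α : Fin d → ℕ}
    (hα : ∑ i, (2 * j i + tentWeight (α i)) + t ≤ 2 * n) (τ : Fin d → ℕ → ZMod 2) :
    ∃ δ, ∀ i, (∀ r < j i, digitMap E n δ i r = τ i r) ∧
      (α i ≠ 0 → ∀ r ∈ ({j i, j i + α i} : Finset ℕ), digitMap E n δ i r = τ i r) := by
  obtain ⟨δ, hδ⟩ := hE.exists_digitMap_eq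
    (T := fun i => Finset.range (j i) ∪ if α i = 0 then ∅ else {j i, j i + α i})
    (p := fun i => if α i = 0 then j i else j i + α i + 1)
    (q := fun i => if α i = 0 then j i else j i + 1) (τ := τ)
    (fun i r => by grind) (fun i r hr r' => by grind)
    (by convert hα using 3 with i; grind [tentWeight])
  refine ⟨δ, fun i => ⟨fun r hr => hδ i r (by simp [hr]), fun hi r hr => hδ i r (by grind)⟩⟩

/-- The points with digit array `y` lie in the dyadic box of side lengths `2 ^ (-j i)` whose
points have leading digits `β`. -/
def InBox {d : ℕ} (j : Fin d → ℕ) (β y : Fin d → ℕ → ZMod 2) : Prop :=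
  ∀ i, ∀ r < j i, y i r = β i r

instance {d : ℕ} (j : Fin d → ℕ) (β : Fin d → ℕ → ZMod 2) : DecidablePred (InBox j β) :=
  fun y => inferInstanceAs (Decidable (∀ i, ∀ r < j i, y i r = β i r))

lemma IsOrderNet.card_inBox {t p d : ℕ} {E : Fin d → ℕ → ℕ → ZMod 2} {j : Fin d → ℕ}
    (hE : IsOrderNet 2 (∑ i, j i + p) t (2 * (∑ i, j i + p)) d E) (ht : t ≤ 2 * p)
    (σ β : Fin d → ℕ → ZMod 2) :
    Finset.card {κ | InBox j β (σ + digitMap E (∑ i, j i + p) κ)} = 2 ^ p := by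
  let φ : (Fin (∑ i, j i + p) → ZMod 2) →+ ∀ i, Fin (j i) → ZMod 2 :=
    AddMonoidHom.mk' (fun κ i r => digitMap E _ κ i r) fun κ κ' => by ext; simp
  have hφ : Function.Surjective φ := fun w => by
    obtain ⟨δ, hδ⟩ := hE.exists_digitMap_eq_of_tentWeight (j := j) (α := 0)
      (by simpa [tentWeight, ← Finset.mul_sum, mul_add] using ht)
      fun i r => if h : r < j i then w i ⟨r, h⟩ else 0
    exact ⟨δ, by ext i r; simpa [φ] using (hδ i).1 r r.2⟩
  let w (i : Fin d) (r : Fin (j i)) : ZMod 2 := β i r - σ i r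
  have hfiber (κ) : InBox j β (σ + digitMap E (∑ i, j i + p) κ) ↔ φ κ = w := by
    simp [InBox, φ, w, funext_iff, Fin.forall_iff, eq_sub_iff_add_eq']
  have hcard := card_fiber_mul_card_of_surjective φ hφ w
  simp only [← hfiber, Fintype.card_pi, ZMod.card, Finset.prod_const, Finset.card_univ,
    Fintype.card_fin, Finset.prod_pow_eq_pow_sum, pow_add] at hcard
  exact Nat.eq_of_mul_eq_mul_right (by positivity) (hcard.trans (mul_comm _ _))

/-! ## Sums over dyadic blocks -/

/-- The tensor product of the tents over the dyadic box `I_{j,m}`. -/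
def tentProd {d : ℕ} (j m : Fin d → ℕ) (x : Fin d → ℝ) : ℝ :=
  ∏ i, tent (2 ^ j i * x i - m i)

/-- The tensor product of the Walsh functions of indices `α i`, applied to the digits of `y`
after removing the first `j i` of them. -/
def walshProd {d : ℕ} (j α : Fin d → ℕ) (y : Fin d → ℕ → ZMod 2) : ℝ :=
  ∏ i, tentWalsh (fun r => y i (j i + r)) (α i)

section TentProd

variable {d : ℕ} {j : Fin d → ℕ}

lemma tentProd_nonneg (m : Fin d → ℕ) (x : Fin d → ℝ) : 0 ≤ tentProd j m x :=
  Finset.prod_nonneg fun _ _ => tent_nonneg _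

lemma walshProd_zero (y : Fin d → ℕ → ZMod 2) : walshProd j 0 y = 1 := by
  simp [walshProd, tentWalsh]

lemma abs_walshProd_le_one (α : Fin d → ℕ) (y : Fin d → ℕ → ZMod 2) : |walshProd j α y| ≤ 1 := by
  rw [walshProd, Finset.abs_prod]
  exact Finset.prod_le_one (fun _ _ => abs_nonneg _) fun _ _ => abs_tentWalsh_le_one _ _

lemma walshProd_add (α : Fin d → ℕ) (y z : Fin d → ℕ → ZMod 2) :
    walshProd j α (y + z) = walshProd j α y * walshProd j α z := by
  rw [walshProd, walshProd, walshProd, ← Finset.prod_mul_distrib]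
  exact Finset.prod_congr rfl fun i _ => tentWalsh_add _ _ _

lemma inBox_add {z : Fin d → ℕ → ZMod 2} (hz : ∀ i, ∀ r < j i, z i r = 0)
    (β y : Fin d → ℕ → ZMod 2) : InBox j β (y + z) ↔ InBox j β y :=
  forall_congr' fun i => forall₂_congr fun r hr => by simp [hz i r hr]

lemma tentProd_binaryFraction (β y : Fin d → ℕ → ZMod 2) :
    tentProd j (fun i => leadingNat (β i) (j i)) (fun i => binaryFraction (y i)) =
      if InBox j β y then ∏ i, tent (binaryFraction fun r => y i (j i + r)) else 0 := by
  simp only [tentProd, tent_two_pow_mul_binaryFraction_sub]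
  by_cases h : InBox j β y
  · rw [if_pos h]
    exact Finset.prod_congr rfl fun i _ => if_pos (h i)
  · obtain ⟨i, hi⟩ := not_forall.1 h
    rw [if_neg h]
    exact Finset.prod_eq_zero (Finset.mem_univ i) (if_neg hi)

lemma hasSum_tentProd (β y : Fin d → ℕ → ZMod 2) :
    HasSum (fun α => (∏ i, tentCoeff (α i)) * if InBox j β y then walshProd j α y else 0)
      (tentProd j (fun i => leadingNat (β i) (j i)) fun i => binaryFraction (y i)) := by
  rw [tentProd_binaryFraction]
  split_ifs
  · simpa [walshProd, Finset.prod_mul_distrib] using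
      hasSum_pi_prod fun i => hasSum_tentWalsh fun r => y i (j i + r)
  · simp

end TentProd

/-- The sum of a Walsh function over those points of a dyadic block of indices that lie in a
given dyadic box; `σ` is the contribution of the index of the block to the digits. -/
def boxWalshSum {d : ℕ} (E : Fin d → ℕ → ℕ → ZMod 2) (n : ℕ) (j α : Fin d → ℕ)
    (σ β : Fin d → ℕ → ZMod 2) : ℝ :=
  ∑ κ, if InBox j β (σ + digitMap E n κ) then walshProd j α (σ + digitMap E n κ) else 0

/-- Some index shift preserves the box and flips the sign of the Walsh function. -/
lemma IsOrderNet.boxWalshSum_eq_zero {n t d : ℕ} {E : Fin d → ℕ → ℕ → ZMod 2} {j α : Fin d → ℕ}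
    (hE : IsOrderNet 2 n t (2 * n) d E) (hα : α ≠ 0)
    (hweight : ∑ i, (2 * j i + tentWeight (α i)) + t ≤ 2 * n) (σ β : Fin d → ℕ → ZMod 2) :
    boxWalshSum E n j α σ β = 0 := by
  obtain ⟨i₀, hi₀⟩ := Function.ne_iff.1 hα
  obtain ⟨δ, hδ⟩ := hE.exists_digitMap_eq_of_tentWeight hweight
    fun i r => if i = i₀ ∧ r = j i then 1 else 0
  have hbox κ : InBox j β (σ + digitMap E n (κ + δ)) ↔ InBox j β (σ + digitMap E n κ) := by
    rw [map_add, ← add_assoc, inBox_add]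
    exact fun i r hr => by simp [(hδ i).1 r hr, hr.ne]
  have hsign : walshProd j α (digitMap E n δ) = -1 := by
    have hfactor i : tentWalsh (fun r => digitMap E n δ i (j i + r)) (α i) =
        if i = i₀ then -1 else 1 := by
      by_cases hi : α i = 0
      · have : i ≠ i₀ := by rintro rfl; exact hi₀ hi
        simp [tentWalsh, hi, this]
      · have hrows := (hδ i).2 hi
        simp only [Finset.mem_insert, Finset.mem_singleton, forall_eq_or_imp, forall_eq] at hrows
        rw [tentWalsh, if_neg hi, add_zero, hrows.1, hrows.2]
        split_ifs <;> simp_all [binarySign_one]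
    simp [walshProd, hfactor]
  have hneg : boxWalshSum E n j α σ β = -boxWalshSum E n j α σ β := by
    rw [boxWalshSum, ← Finset.sum_neg_distrib]
    refine (Equiv.sum_comp (Equiv.addRight δ) _).symm.trans (Finset.sum_congr rfl fun κ _ => ?_)
    simp only [Equiv.coe_addRight, hbox]
    rw [map_add, ← add_assoc, walshProd_add, hsign]
    split_ifs <;> simp
  linarith

lemma hasSum_abs_tentCoeff_mul :
    HasSum (fun a => |tentCoeff a| * (3 / 2) ^ tentWeight a) (31 / 16) := by
  have hterm (a : ℕ) : |tentCoeff (a + 1)| * (3 / 2) ^ tentWeight (a + 1) =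
      (3 / 4) ^ 3 * (3 / 4 : ℝ) ^ a := by
    rw [tentCoeff, tentWeight, if_neg a.succ_ne_zero, if_neg a.succ_ne_zero, abs_neg,
      abs_of_nonneg (by positivity), ← mul_pow, ← pow_add]
    norm_num
    ring
  have hgeom := (hasSum_geometric_of_lt_one (r := (3 / 4 : ℝ)) (by norm_num)
    (by norm_num)).mul_left ((3 / 4) ^ 3)
  simp only [← hterm] at hgeom
  have hsum := (hasSum_nat_add_iff (f := fun a => |tentCoeff a| * (3 / 2 : ℝ) ^ tentWeight a) 1).1
    hgeom
  have hvalue : (3 / 4 : ℝ) ^ 3 * (1 - 3 / 4)⁻¹ + ∑ a ∈ Finset.range 1,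
      |tentCoeff a| * (3 / 2) ^ tentWeight a = 31 / 16 := by
    norm_num [tentCoeff, tentWeight]
  exact hvalue ▸ hsum

section Block

variable {d t p : ℕ} {E : Fin d → ℕ → ℕ → ZMod 2} {j : Fin d → ℕ}

lemma IsOrderNet.sum_inBox (hE : IsOrderNet 2 (∑ i, j i + p) t (2 * (∑ i, j i + p)) d E)
    (ht : t ≤ 2 * p) (σ β : Fin d → ℕ → ZMod 2) :
    ∑ κ, (if InBox j β (σ + digitMap E (∑ i, j i + p) κ) then (1 : ℝ) else 0) = 2 ^ p := by
  rw [Finset.sum_boole, hE.card_inBox ht]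
  norm_cast

lemma IsOrderNet.boxWalshSum_zero (hE : IsOrderNet 2 (∑ i, j i + p) t (2 * (∑ i, j i + p)) d E)
    (ht : t ≤ 2 * p) (σ β : Fin d → ℕ → ZMod 2) :
    boxWalshSum E (∑ i, j i + p) j 0 σ β = 2 ^ p := by
  rw [← hE.sum_inBox ht σ β]
  simp only [boxWalshSum, walshProd_zero]

lemma IsOrderNet.abs_boxWalshSum_le
    (hE : IsOrderNet 2 (∑ i, j i + p) t (2 * (∑ i, j i + p)) d E) (ht : t ≤ 2 * p)
    (α : Fin d → ℕ) (σ β : Fin d → ℕ → ZMod 2) :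
    |boxWalshSum E (∑ i, j i + p) j α σ β| ≤ 2 ^ p := by
  rw [← hE.sum_inBox ht σ β]
  refine (Finset.abs_sum_le_sum_abs _ _).trans (Finset.sum_le_sum fun κ _ => ?_)
  split_ifs
  · exact abs_walshProd_le_one _ _
  · simp

/-- Rankin's trick: a Walsh sum can be nonzero only if its weight is large, so it does no harm to
multiply it by a growing exponential of the weight. -/
lemma IsOrderNet.abs_boxWalshSum_le_of_ne_zero
    (hE : IsOrderNet 2 (∑ i, j i + p) t (2 * (∑ i, j i + p)) d E) (ht : t ≤ 2 * p)
    {α : Fin d → ℕ} (hα : α ≠ 0) (σ β : Fin d → ℕ → ZMod 2) :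
    |boxWalshSum E (∑ i, j i + p) j α σ β| ≤
      (3 / 2) ^ t * (8 / 9) ^ p * ∏ i, (3 / 2) ^ tentWeight (α i) := by
  rw [Finset.prod_pow_eq_pow_sum]
  by_cases hweight : ∑ i, (2 * j i + tentWeight (α i)) + t ≤ 2 * (∑ i, j i + p)
  · rw [hE.boxWalshSum_eq_zero hα hweight, abs_zero]
    positivity
  · rw [Finset.sum_add_distrib, ← Finset.mul_sum] at hweight
    calc |boxWalshSum E (∑ i, j i + p) j α σ β| ≤ 2 ^ p := hE.abs_boxWalshSum_le ht α σ β
      _ = (8 / 9) ^ p * (3 / 2) ^ (2 * p) := by rw [pow_mul, ← mul_pow]; norm_num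
      _ ≤ (8 / 9) ^ p * (3 / 2) ^ (t + ∑ i, tentWeight (α i)) := by
        gcongr
        · norm_num
        · omega
      _ = _ := by ring

lemma sum_block_tentProd (E : Fin d → ℕ → ℕ → ZMod 2) (n a : ℕ) (m : Fin d → ℕ) :
    ∑ k ∈ Finset.range (2 ^ n), tentProd j m (digitalSeq d E (2 ^ n * a + k)) =
      ∑ κ, tentProd j m (fun i =>
        binaryFraction (((fun i => coordDigit (E i) (2 ^ n * a)) + digitMap E n κ) i)) :=
  sum_block_coordDigit E n a fun y => tentProd j m fun i => binaryFraction (y i)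

lemma exists_leadingNat_eq_pi {m : Fin d → ℕ} (hm : ∀ i, m i < 2 ^ j i) :
    ∃ β : Fin d → ℕ → ZMod 2, m = fun i => leadingNat (β i) (j i) := by
  choose β hβ using fun i => exists_leadingNat_eq (j i) (hm i)
  exact ⟨β, funext fun i => (hβ i).symm⟩

lemma hasSum_sum_block_tentProd (E : Fin d → ℕ → ℕ → ZMod 2) (n a : ℕ) {m : Fin d → ℕ}
    (hm : ∀ i, m i < 2 ^ j i) : ∃ σ β : Fin d → ℕ → ZMod 2,
    HasSum (fun α => (∏ i, tentCoeff (α i)) * boxWalshSum E n j α σ β)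
      (∑ k ∈ Finset.range (2 ^ n), tentProd j m (digitalSeq d E (2 ^ n * a + k))) := by
  obtain ⟨β, rfl⟩ := exists_leadingNat_eq_pi hm
  refine ⟨fun i => coordDigit (E i) (2 ^ n * a), β, ?_⟩
  rw [sum_block_tentProd]
  simp only [boxWalshSum, Finset.mul_sum]
  exact hasSum_sum fun κ _ => hasSum_tentProd β _

/-- The term `α = 0` of the Walsh expansion cancels against the mean of the tents. -/
lemma IsOrderNet.abs_sum_block_tentProd_sub_le
    (hE : IsOrderNet 2 (∑ i, j i + p) t (2 * (∑ i, j i + p)) d E) (ht : t ≤ 2 * p)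
    {m : Fin d → ℕ} (hm : ∀ i, m i < 2 ^ j i) (a : ℕ) :
    |∑ k ∈ Finset.range (2 ^ (∑ i, j i + p)),
        (tentProd j m (digitalSeq d E (2 ^ (∑ i, j i + p) * a + k)) -
          (1 / 2) ^ (∑ i, j i) * (1 / 4) ^ d)| ≤
      2 ^ d * (3 / 2) ^ t * (8 / 9) ^ p := by
  obtain ⟨σ, β, hsum⟩ := hasSum_sum_block_tentProd E (∑ i, j i + p) a hm
  set F : (Fin d → ℕ) → ℝ :=
    fun α => (∏ i, tentCoeff (α i)) * boxWalshSum E (∑ i, j i + p) j α σ β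
  have hmean : F 0 = ∑ _k ∈ Finset.range (2 ^ (∑ i, j i + p)),
      ((1 / 2 : ℝ) ^ (∑ i, j i) * (1 / 4) ^ d) := by
    have hcancel : (2 : ℝ) ^ (∑ i, j i) * (1 / 2) ^ (∑ i, j i) = 1 := by
      rw [← mul_pow]
      norm_num
    simp only [F, hE.boxWalshSum_zero ht, Pi.zero_apply, tentCoeff, if_true, Finset.prod_const,
      Finset.card_univ, Fintype.card_fin, Finset.sum_const, Finset.card_range, nsmul_eq_mul]
    push_cast
    linear_combination (-(2 : ℝ) ^ p * (1 / 4) ^ d) * hcancel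
  have hdiff : HasSum (fun α => F α - if α = 0 then F 0 else 0) _ :=
    hsum.sub (hasSum_ite_eq 0 (F 0))
  have hbound := (hasSum_pi_prod fun _ : Fin d => hasSum_abs_tentCoeff_mul).mul_left
    ((3 / 2 : ℝ) ^ t * (8 / 9) ^ p)
  rw [Finset.sum_sub_distrib, ← hmean]
  refine (hdiff.norm_le_of_bounded hbound fun α => ?_).trans ?_
  · rw [Finset.prod_mul_distrib]
    split_ifs with hα
    · rw [hα, sub_self, norm_zero]
      positivity
    · rw [sub_zero, Real.norm_eq_abs, abs_mul, Finset.abs_prod, mul_left_comm]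
      gcongr
      exact hE.abs_boxWalshSum_le_of_ne_zero ht hα σ β
  · rw [Finset.prod_const, Finset.card_univ, Fintype.card_fin, mul_comm, ← mul_assoc]
    gcongr
    norm_num

lemma IsOrderNet.abs_sum_partial_block_tentProd_sub_le
    (hE : IsOrderNet 2 (∑ i, j i + p) t (2 * (∑ i, j i + p)) d E) (ht : t ≤ 2 * p)
    {m : Fin d → ℕ} (hm : ∀ i, m i < 2 ^ j i) (a : ℕ) {r : ℕ} (hr : r ≤ 2 ^ (∑ i, j i + p)) :
    |∑ k ∈ Finset.range r, (tentProd j m (digitalSeq d E (2 ^ (∑ i, j i + p) * a + k)) -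
          (1 / 2) ^ (∑ i, j i) * (1 / 4) ^ d)| ≤ 2 ^ p := by
  obtain ⟨β, rfl⟩ := exists_leadingNat_eq_pi hm
  have hpoints : ∑ k ∈ Finset.range r, tentProd j (fun i => leadingNat (β i) (j i))
      (digitalSeq d E (2 ^ (∑ i, j i + p) * a + k)) ≤ 2 ^ p := by
    rw [← hE.sum_inBox ht (fun i => coordDigit (E i) (2 ^ (∑ i, j i + p) * a)) β]
    refine (Finset.sum_le_sum_of_subset_of_nonneg (Finset.range_mono hr)
      fun _ _ _ => tentProd_nonneg _ _).trans ?_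
    rw [sum_block_tentProd]
    refine Finset.sum_le_sum fun κ _ => ?_
    rw [tentProd_binaryFraction]
    split_ifs
    · exact Finset.prod_le_one (fun _ _ => tent_nonneg _) fun _ _ => tent_le_one _
    · rfl
  have hmean : ∑ _k ∈ Finset.range r, ((1 / 2 : ℝ) ^ (∑ i, j i) * (1 / 4) ^ d) ≤ 2 ^ p := by
    have hr' : (r : ℝ) ≤ 2 ^ (∑ i, j i + p) := by exact_mod_cast hr
    have hd : (1 / 4 : ℝ) ^ d ≤ 1 := pow_le_one₀ (by norm_num) (by norm_num)
    calc _ = r * (1 / 2 : ℝ) ^ (∑ i, j i) * (1 / 4) ^ d := by simp [mul_assoc]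
      _ ≤ 2 ^ (∑ i, j i + p) * (1 / 2) ^ (∑ i, j i) * 1 := by gcongr
      _ = 2 ^ p := by rw [mul_one, pow_add, mul_right_comm, ← mul_pow]; norm_num
  rw [Finset.sum_sub_distrib]
  exact abs_sub_le_of_nonneg_of_le (Finset.sum_nonneg fun _ _ => tentProd_nonneg _ _) hpoints
    (by positivity) hmean

end Block

/-! ## Initial segments of the sequence -/

/-- An initial segment of length `2 ^ (L + p) * a` consists of one of length
`2 ^ (L + p + 1) * (a / 2)` and at most one block of length `2 ^ (L + p)`. -/
lemma abs_sum_range_two_pow_mul_le {g : ℕ → ℝ} {L : ℕ} {A ρ : ℝ} (hρ : ρ < 1)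
    (hblock : ∀ p a, |∑ k ∈ Finset.range (2 ^ (L + p)), g (2 ^ (L + p) * a + k)| ≤ A * ρ ^ p)
    (p a : ℕ) : |∑ k ∈ Finset.range (2 ^ (L + p) * a), g k| ≤ A * ρ ^ p / (1 - ρ) := by
  have hnonneg : 0 ≤ A * ρ ^ p := (abs_nonneg _).trans (hblock p 0)
  have hρ' : 0 < 1 - ρ := sub_pos.2 hρ
  induction a using Nat.strong_induction_on generalizing p with
  | _ a ih =>
  rcases Nat.eq_zero_or_pos a with rfl | ha
  · simpa using div_nonneg hnonneg hρ'.le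
  have hhalf := ih (a / 2) (by omega) (p + 1) ((abs_nonneg _).trans (hblock (p + 1) 0))
  have hlength : 2 ^ (L + (p + 1)) * (a / 2) = 2 ^ (L + p) * (2 * (a / 2)) := by ring
  have hgeom : A * ρ ^ (p + 1) / (1 - ρ) + A * ρ ^ p = A * ρ ^ p / (1 - ρ) := by
    field_simp
    ring
  rw [hlength] at hhalf
  obtain heven | hodd : 2 * (a / 2) = a ∨ a = 2 * (a / 2) + 1 := by omega
  · rw [heven] at hhalf
    linarith
  · rw [hodd, mul_add_one, Finset.sum_range_add, ← hgeom]
    exact (abs_add_le _ _).trans (add_le_add hhalf (hblock p _))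

section Sequence

variable {d t : ℕ} {E : Fin d → ℕ → ℕ → ZMod 2} {j m : Fin d → ℕ}

lemma IsOrderSeq.abs_sum_range_tentProd_sub_le (hE : IsOrderSeq 2 t d E)
    (hm : ∀ i, m i < 2 ^ j i) (N : ℕ) :
    |∑ k ∈ Finset.range N,
        (tentProd j m (digitalSeq d E k) - (1 / 2) ^ (∑ i, j i) * (1 / 4) ^ d)| ≤
      (9 * 2 ^ d + 2) * 2 ^ t := by
  set p₀ := t / 2 + 1
  have hnet (p : ℕ) (hp : t < 2 * p) :
      IsOrderNet 2 (∑ i, j i + p) t (2 * (∑ i, j i + p)) d E := hE _ (by omega)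
  have haligned := abs_sum_range_two_pow_mul_le (L := ∑ i, j i + p₀)
    (g := fun k => tentProd j m (digitalSeq d E k) - (1 / 2) ^ (∑ i, j i) * (1 / 4) ^ d)
    (A := 2 ^ d * (3 / 2) ^ t * (8 / 9) ^ p₀) (ρ := 8 / 9) (by norm_num)
    (fun p a => by
      rw [add_assoc, mul_assoc, ← pow_add]
      exact (hnet (p₀ + p) (by omega)).abs_sum_block_tentProd_sub_le (by omega) hm a)
    0 (N / 2 ^ (∑ i, j i + p₀))
  rw [add_zero] at haligned
  have hrest := (hnet p₀ (by omega)).abs_sum_partial_block_tentProd_sub_le (by omega) hm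
    (N / 2 ^ (∑ i, j i + p₀)) (Nat.mod_lt N (Nat.two_pow_pos _)).le
  rw [← Nat.div_add_mod N (2 ^ (∑ i, j i + p₀)), Finset.sum_range_add]
  calc _ ≤ 2 ^ d * (3 / 2) ^ t * (8 / 9) ^ p₀ * (8 / 9) ^ 0 / (1 - 8 / 9) + 2 ^ p₀ :=
        (abs_add_le _ _).trans (add_le_add haligned hrest)
    _ ≤ 2 ^ d * 2 ^ t * 1 * (8 / 9) ^ 0 / (1 - 8 / 9) + 2 ^ (t + 1) := by
        gcongr
        · norm_num
        · exact pow_le_one₀ (by norm_num) (by norm_num)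
        · norm_num
        · omega
    _ = (9 * 2 ^ d + 2) * 2 ^ t := by ring

/-- The grid of level `j i` contains the `i`-th coordinate of the point, and tents vanish there. -/
lemma Triangular2.tentProd_digitalSeq_eq_zero (hE : Triangular2 d E) {k L : ℕ} (hk : k < 2 ^ L)
    {i : Fin d} (hi : 2 * L ≤ j i) : tentProd j m (digitalSeq d E k) = 0 := by
  refine Finset.prod_eq_zero (Finset.mem_univ i) ?_
  have htail : (fun r => coordDigit (E i) k (j i + r)) = 0 :=
    funext fun r => hE.coordDigit_eq_zero i hk (hi.trans (Nat.le_add_right _ r))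
  rw [digitalSeq_apply, two_pow_mul_binaryFraction, htail, binaryFraction_zero,
    tent_natCast_sub_add (by simp), tent_of_nonpos le_rfl, ite_self]

end Sequence

/-! ## Haar coefficients of the discrepancy function -/

lemma haar1_natCast (j m : ℕ) (x : ℝ) :
    haar1 j m x = (Set.Ico ((m : ℝ) / 2 ^ j) ((m + 1 / 2) / 2 ^ j)).indicator 1 x -
      (Set.Ico ((m + 1 / 2 : ℝ) / 2 ^ j) ((m + 1) / 2 ^ j)).indicator 1 x := by
  simp only [haar1, Set.indicator_apply, Set.mem_Ico, Int.toNat_natCast, Pi.one_apply]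
  grind

section OneDimensional

lemma mul_haar1_natCast (φ : ℝ → ℝ) (j m : ℕ) :
    (fun x => φ x * haar1 j m x) = fun x =>
      (Set.Ico ((m : ℝ) / 2 ^ j) ((m + 1 / 2) / 2 ^ j)).indicator φ x -
        (Set.Ico ((m + 1 / 2 : ℝ) / 2 ^ j) ((m + 1) / 2 ^ j)).indicator φ x := by
  ext x
  simp only [haar1_natCast, Set.indicator_apply, Pi.one_apply, mul_sub, mul_ite, mul_one, mul_zero]

variable {φ : ℝ → ℝ}

lemma integrableOn_mul_haar1 {s : Set ℝ} (hφ : IntegrableOn φ s) (j m : ℕ) :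
    IntegrableOn (fun x => φ x * haar1 j m x) s := by
  rw [mul_haar1_natCast]
  exact (hφ.indicator measurableSet_Ico).sub (hφ.indicator measurableSet_Ico)

lemma integral_indicator_Ico {s : Set ℝ} {a b : ℝ} (hab : a ≤ b) (hs : Set.Icc a b ⊆ s) :
    ∫ x in s, (Set.Ico a b).indicator φ x = ∫ x in a..b, φ x := by
  rw [setIntegral_indicator measurableSet_Ico,
    Set.inter_eq_self_of_subset_right (Set.Ico_subset_Icc_self.trans hs),
    integral_Ico_eq_integral_Ioc, intervalIntegral.integral_of_le hab]

lemma integral_mul_haar1 (hφ : IntegrableOn φ (Set.Icc 0 1)) {j m : ℕ} (hm : m < 2 ^ j) :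
    ∫ x in Set.Icc 0 1, φ x * haar1 j m x =
      (∫ x in (m / 2 ^ j : ℝ)..((m + 1 / 2) / 2 ^ j), φ x) -
        ∫ x in ((m + 1 / 2) / 2 ^ j : ℝ)..((m + 1) / 2 ^ j), φ x := by
  have hm' : (m : ℝ) + 1 ≤ 2 ^ j := by exact_mod_cast hm
  have hleft : (m : ℝ) / 2 ^ j ≤ (m + 1 / 2) / 2 ^ j := by gcongr; linarith
  have hright : (m + 1 / 2 : ℝ) / 2 ^ j ≤ (m + 1) / 2 ^ j := by gcongr; norm_num
  have hzero : (0 : ℝ) ≤ m / 2 ^ j := by positivity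
  have hone : (m + 1 : ℝ) / 2 ^ j ≤ 1 := (div_le_one (by positivity)).2 hm'
  rw [mul_haar1_natCast, integral_sub (hφ.indicator measurableSet_Ico)
    (hφ.indicator measurableSet_Ico),
    integral_indicator_Ico hleft (Set.Icc_subset_Icc hzero (hright.trans hone)),
    integral_indicator_Ico hright (Set.Icc_subset_Icc (hzero.trans hleft) hone)]

lemma integrableOn_ite_lt {s : Set ℝ} (hs : volume s ≠ ⊤) (z : ℝ) :
    IntegrableOn (fun x => if z < x then (1 : ℝ) else 0) s :=
  (integrableOn_const hs).indicator measurableSet_Ioi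

lemma integral_ite_lt {a b : ℝ} (hab : a ≤ b) (z : ℝ) :
    ∫ x in a..b, (if z < x then (1 : ℝ) else 0) = max b z - max a z := by
  have hindicator : (fun x => if z < x then (1 : ℝ) else 0) = (Set.Ioi z).indicator 1 := by
    ext x
    simp [Set.indicator_apply]
  rw [intervalIntegral.integral_of_le hab, hindicator, setIntegral_indicator measurableSet_Ioi,
    Set.Ioc_inter_Ioi]
  simp only [Pi.one_apply, setIntegral_const, Real.volume_real_Ioc, smul_eq_mul, mul_one]
  grind

lemma max_sub_max_sub_max_sub_max_eq_neg_tent (w : ℝ) :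
    (max (1 / 2) w - max 0 w) - (max 1 w - max (1 / 2) w) = -tent w := by
  grind [tent]

lemma integral_ite_lt_mul_haar1 {j m : ℕ} (hm : m < 2 ^ j) (z : ℝ) :
    ∫ x in Set.Icc 0 1, (if z < x then (1 : ℝ) else 0) * haar1 j m x =
      -((1 / 2) ^ j * tent (2 ^ j * z - m)) := by
  have hmax (c : ℝ) : max ((m + c) / 2 ^ j) z = (m + max c (2 ^ j * z - m)) / 2 ^ j := by
    rw [← max_add_add_left, add_sub_cancel, ← max_div_div_right (by positivity),
      mul_div_cancel_left₀ _ (by positivity)]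
  have hmax₀ := hmax 0
  rw [add_zero] at hmax₀
  rw [integral_mul_haar1 (integrableOn_ite_lt (by simp) z) hm,
    integral_ite_lt (by gcongr; linarith), integral_ite_lt (by gcongr; norm_num), hmax, hmax, hmax₀,
    ← mul_neg, ← max_sub_max_sub_max_sub_max_eq_neg_tent, one_div_pow]
  ring

lemma integral_id_mul_haar1 {j m : ℕ} (hm : m < 2 ^ j) :
    ∫ x in Set.Icc (0 : ℝ) 1, x * haar1 j m x = -((1 / 2) ^ j * ((1 / 2) ^ j * (1 / 4))) := by
  rw [integral_mul_haar1 (φ := fun x => x) continuous_id.continuousOn.integrableOn_Icc hm,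
    integral_id, integral_id, one_div_pow]
  field_simp
  ring

end OneDimensional

section Tensor

variable {d : ℕ}

lemma restrict_volume_unitCube :
    (volume : Measure (Fin d → ℝ)).restrict (unitCube d) =
      Measure.pi fun _ => (volume : Measure ℝ).restrict (Set.Icc 0 1) := by
  rw [unitCube, volume_pi, Measure.restrict_pi_pi]

lemma integrableOn_prod_mul_haarFn {f : Fin d → ℝ → ℝ}
    (hf : ∀ i, IntegrableOn (f i) (Set.Icc 0 1)) (j m : Fin d → ℕ) :
    IntegrableOn (fun x => (∏ i, f i (x i)) * haarFn d (fun i => j i) m x) (unitCube d) := by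
  simp only [haarFn, ← Finset.prod_mul_distrib]
  rw [IntegrableOn, restrict_volume_unitCube]
  exact Integrable.fintype_prod (f := fun i x => f i x * haar1 (j i) (m i) x)
    fun i => integrableOn_mul_haar1 (hf i) _ _

lemma haarCoeff_prod (f : Fin d → ℝ → ℝ) (j : Fin d → ℤ) (m : Fin d → ℕ) :
    haarCoeff d (fun x => ∏ i, f i (x i)) j m =
      ∏ i, ∫ x in Set.Icc 0 1, f i x * haar1 (j i) (m i) x := by
  simp only [haarCoeff, haarFn, ← Finset.prod_mul_distrib]
  rw [restrict_volume_unitCube]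
  exact integral_fintype_prod_eq_prod (fun i x => f i x * haar1 (j i) (m i) x)

end Tensor

section Discrepancy

variable {d : ℕ} {j m : Fin d → ℕ}

lemma haarCoeff_prod_ite_lt (hm : ∀ i, m i < 2 ^ j i) (z : Fin d → ℝ) :
    haarCoeff d (fun x => ∏ i, if z i < x i then 1 else 0) (fun i => j i) m =
      (-1) ^ d * (1 / 2) ^ (∑ i, j i) * tentProd j m z := by
  rw [haarCoeff_prod fun i x => if z i < x then 1 else 0]
  simp only [integral_ite_lt_mul_haar1 (hm _), tentProd]
  rw [Finset.prod_neg, Finset.prod_mul_distrib, Finset.prod_pow_eq_pow_sum, Finset.card_univ,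
    Fintype.card_fin, mul_assoc]

lemma haarCoeff_prod_id (hm : ∀ i, m i < 2 ^ j i) :
    haarCoeff d (fun x => ∏ i, x i) (fun i => j i) m =
      (-1) ^ d * (1 / 2) ^ (∑ i, j i) * ((1 / 2) ^ (∑ i, j i) * (1 / 4) ^ d) := by
  rw [haarCoeff_prod fun _ x => x]
  simp only [integral_id_mul_haar1 (hm _)]
  rw [Finset.prod_neg, Finset.prod_mul_distrib, Finset.prod_mul_distrib,
    Finset.prod_pow_eq_pow_sum, Finset.prod_const, Finset.card_univ, Fintype.card_fin, mul_assoc]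

lemma discSeq_eq_sum (S : ℕ → Fin d → ℝ) (N : ℕ) (x : Fin d → ℝ) :
    discSeq d S N x =
      (∑ k ∈ Finset.range N, ∏ i, if S k i < x i then 1 else 0) / N - ∏ i, x i := by
  classical
  rw [discSeq, Nat.card_eq_fintype_card, Fintype.card_subtype, ← Finset.sum_boole,
    Finset.sum_range]
  simp [Finset.prod_boole]

lemma haarCoeff_discSeq (S : ℕ → Fin d → ℝ) {N : ℕ} (hN : N ≠ 0) (hm : ∀ i, m i < 2 ^ j i) :
    haarCoeff d (discSeq d S N) (fun i => j i) m =
      (-1) ^ d * (1 / 2) ^ (∑ i, j i) * (∑ k ∈ Finset.range N,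
        (tentProd j m (S k) - (1 / 2) ^ (∑ i, j i) * (1 / 4) ^ d)) / N := by
  have hpoint k := integrableOn_prod_mul_haarFn
    (fun i => integrableOn_ite_lt (s := Set.Icc 0 1) (by simp) (S k i)) j m
  have hid := integrableOn_prod_mul_haarFn (d := d) (f := fun _ x => x)
    (fun _ => continuous_id.continuousOn.integrableOn_Icc) j m
  have hlinear : haarCoeff d (discSeq d S N) (fun i => j i) m =
      (∑ k ∈ Finset.range N, haarCoeff d (fun x => ∏ i, if S k i < x i then 1 else 0)
        (fun i => j i) m) / N - haarCoeff d (fun x => ∏ i, x i) (fun i => j i) m := by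
    simp only [haarCoeff, discSeq_eq_sum, sub_mul, div_mul_eq_mul_div, Finset.sum_mul]
    rw [integral_sub ((integrable_finsetSum _ fun k _ => hpoint k).div_const _) hid, integral_div,
      integral_finsetSum _ fun k _ => hpoint k]
  simp only [hlinear, haarCoeff_prod_ite_lt hm, haarCoeff_prod_id hm]
  rw [Finset.sum_sub_distrib, ← Finset.mul_sum, Finset.sum_const, Finset.card_range, nsmul_eq_mul]
  field_simp

end Discrepancy

/-! ## The BMO seminorm -/

section Boxes

variable {d : ℕ} {j : Fin d → ℕ}

lemma volume_dyadicBox (m : Fin d → ℕ) :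
    volume (dyadicBox d (fun i => j i) m) = ENNReal.ofReal ((1 / 2) ^ ∑ i, j i) := by
  rw [dyadicBox, volume_pi_pi, ← Finset.prod_pow_eq_pow_sum,
    ENNReal.ofReal_prod_of_nonneg fun _ _ => by positivity]
  simp only [dyadicI, Real.volume_Ico, Int.toNat_natCast, ← sub_div, add_sub_cancel_left,
    one_div_pow]

lemma floor_eq_of_mem_dyadicI {j m : ℕ} {x : ℝ} (hx : x ∈ dyadicI j m) : ⌊2 ^ j * x⌋₊ = m := by
  have hpos : (0 : ℝ) < 2 ^ j := by positivity
  rw [dyadicI, Int.toNat_natCast, Set.mem_Ico, div_le_iff₀' hpos, lt_div_iff₀' hpos] at hx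
  exact (Nat.floor_eq_iff (m.cast_nonneg.trans hx.1)).2 hx

lemma pairwise_disjoint_dyadicBox :
    Pairwise (Function.onFun Disjoint (dyadicBox d fun i => j i)) := fun _ _ hne =>
  Set.disjoint_left.2 fun _ hx hx' => hne <| funext fun i =>
    (floor_eq_of_mem_dyadicI (hx i trivial)).symm.trans (floor_eq_of_mem_dyadicI (hx' i trivial))

open scoped Classical in
lemma sum_volume_dyadicBox_le (s : Finset (Fin d → ℕ)) (U : Set (Fin d → ℝ)) :
    ∑ m ∈ s, (if dyadicBox d (fun i => j i) m ⊆ U then volume (dyadicBox d (fun i => j i) m)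
      else 0) ≤ volume U := by
  rw [← Finset.sum_filter, ← measure_biUnion_finset (pairwise_disjoint_dyadicBox.set_pairwise _)
    fun _ _ => MeasurableSet.univ_pi fun _ => measurableSet_Ico]
  exact measure_mono (Set.iUnion₂_subset fun m hm => (Finset.mem_filter.1 hm).2)

open scoped Classical in
lemma sum_dyadicBox_subset_le {f : (Fin d → ℝ) → ℝ} {c : ℝ}
    (hc : ∀ m : Fin d → ℕ, (∀ i, m i < 2 ^ j i) →
      4 ^ (∑ i, j i) * haarCoeff d f (fun i => j i) m ^ 2 ≤ c) (U : Set (Fin d → ℝ)) :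
    ∑ m ∈ Dfin0 d j, (if dyadicBox d (fun i => j i) m ⊆ U then
      (2 : ℝ≥0∞) ^ (∑ i, j i) * ENNReal.ofReal (haarCoeff d f (fun i => j i) m ^ 2) else 0) ≤
      volume U * ENNReal.ofReal c := by
  refine le_trans ?_ (mul_le_mul_left (sum_volume_dyadicBox_le (j := j) (Dfin0 d j) U) _)
  rw [Finset.sum_mul]
  refine Finset.sum_le_sum fun m hm => ?_
  have hbound := hc m fun i => Finset.mem_range.1 (Fintype.mem_piFinset.1 hm i)
  split_ifs
  · rw [volume_dyadicBox, ← ENNReal.ofReal_ofNat, ← ENNReal.ofReal_pow (by norm_num),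
      ← ENNReal.ofReal_mul (by positivity), ← ENNReal.ofReal_mul (by positivity)]
    refine ENNReal.ofReal_le_ofReal (le_trans (le_of_eq ?_)
      (mul_le_mul_of_nonneg_left hbound (by positivity)))
    rw [← mul_assoc, ← mul_pow]
    norm_num
  · exact zero_le

end Boxes

lemma bmoSq_le_of_hasSum {d : ℕ} {f : (Fin d → ℝ) → ℝ} {w : (Fin d → ℕ) → ℝ} {s : ℝ}
    (hw : HasSum w s)
    (hf : ∀ j m : Fin d → ℕ, (∀ i, m i < 2 ^ j i) →
      4 ^ (∑ i, j i) * haarCoeff d f (fun i => j i) m ^ 2 ≤ w j) (U : Set (Fin d → ℝ)) :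
    bmoSq d f U ≤ ENNReal.ofReal s := by
  have hw_nonneg (j) : 0 ≤ w j := le_trans (by positivity) (hf j 0 fun _ => Nat.two_pow_pos _)
  calc bmoSq d f U ≤ (volume U)⁻¹ * ∑' j, volume U * ENNReal.ofReal (w j) := by
        rw [bmoSq]
        gcongr with j
        exact sum_dyadicBox_subset_le (hf j) U
    _ = (volume U)⁻¹ * volume U * ENNReal.ofReal s := by
        rw [ENNReal.tsum_mul_left, ← ENNReal.ofReal_tsum_of_nonneg hw_nonneg hw.summable,
          hw.tsum_eq, mul_assoc]
    _ ≤ ENNReal.ofReal s := mul_le_of_le_one_left' (ENNReal.inv_mul_le_one _)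

lemma bmoNorm_le_of_hasSum {d : ℕ} {f : (Fin d → ℝ) → ℝ} {w : (Fin d → ℕ) → ℝ} {s : ℝ}
    (hw : HasSum w s)
    (hf : ∀ j m : Fin d → ℕ, (∀ i, m i < 2 ^ j i) →
      4 ^ (∑ i, j i) * haarCoeff d f (fun i => j i) m ^ 2 ≤ w j) :
    bmoNorm d f ≤ ENNReal.ofReal √s := by
  have hs : 0 ≤ s := hw.nonneg fun j =>
    le_trans (by positivity) (hf j 0 fun _ => Nat.two_pow_pos _)
  rw [bmoNorm, Real.sqrt_eq_rpow, ← ENNReal.ofReal_rpow_of_nonneg hs (by norm_num)]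
  gcongr
  exact iSup_le fun U => bmoSq_le_of_hasSum hw hf U

lemma hasSum_ite_forall_lt (d L : ℕ) :
    HasSum (fun j : Fin d → ℕ => if ∀ i, j i < L then (1 : ℝ) else 0) (L ^ d) := by
  have hone : HasSum (fun a => if a < L then (1 : ℝ) else 0)
      (∑ a ∈ Finset.range L, if a < L then 1 else 0) :=
    hasSum_sum_of_ne_finset_zero fun a ha => if_neg (mt Finset.mem_range.2 ha)
  rw [Finset.sum_congr rfl fun a ha => if_pos (Finset.mem_range.1 ha)] at hone
  simpa [Finset.prod_boole] using hasSum_pi_prod fun _ : Fin d => hone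

lemma hasSum_one_half_pow_sum (d : ℕ) :
    HasSum (fun j : Fin d → ℕ => (1 / 2 : ℝ) ^ ∑ i, j i) (2 ^ d) := by
  simpa [Finset.prod_pow_eq_pow_sum] using hasSum_pi_prod fun _ : Fin d => hasSum_geometric_two

section Discrepancy

variable {d t N n : ℕ} {E : Fin d → ℕ → ℕ → ZMod 2} {j m : Fin d → ℕ}

lemma four_pow_mul_haarCoeff_discSeq_sq (S : ℕ → Fin d → ℝ) (hN : N ≠ 0)
    (hm : ∀ i, m i < 2 ^ j i) :
    4 ^ (∑ i, j i) * haarCoeff d (discSeq d S N) (fun i => j i) m ^ 2 =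
      ((∑ k ∈ Finset.range N,
        (tentProd j m (S k) - (1 / 2) ^ (∑ i, j i) * (1 / 4) ^ d)) / N) ^ 2 := by
  have hscale : (4 : ℝ) ^ (∑ i, j i) * ((1 / 2) ^ ∑ i, j i) ^ 2 = 1 := by
    rw [pow_right_comm, ← mul_pow]
    norm_num
  have hsign : ((-1 : ℝ) ^ d) ^ 2 = 1 := by rw [pow_right_comm, neg_one_sq, one_pow]
  rw [haarCoeff_discSeq S hN hm, mul_div_assoc, mul_pow, mul_pow, hsign, one_mul, ← mul_assoc,
    hscale, one_mul]

lemma IsOrderSeq.four_pow_mul_haarCoeff_sq_le (hE : IsOrderSeq 2 t d E) (hN : N ≠ 0)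
    (hm : ∀ i, m i < 2 ^ j i) :
    4 ^ (∑ i, j i) * haarCoeff d (discSeq d (digitalSeq d E) N) (fun i => j i) m ^ 2 ≤
      ((9 * 2 ^ d + 2) * 2 ^ t / N) ^ 2 := by
  rw [four_pow_mul_haarCoeff_discSeq_sq _ hN hm, ← sq_abs, abs_div, Nat.abs_cast]
  gcongr
  exact hE.abs_sum_range_tentProd_sub_le hm N

/-- On such small boxes only the linear part of the discrepancy function survives. -/
lemma Triangular2.four_pow_mul_haarCoeff_sq_le (hE : Triangular2 d E) (hN : N ≠ 0)
    (hNn : N ≤ 2 ^ n) (hm : ∀ i, m i < 2 ^ j i) {i : Fin d} (hi : 2 * n ≤ j i) :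
    4 ^ (∑ i, j i) * haarCoeff d (discSeq d (digitalSeq d E) N) (fun i => j i) m ^ 2 ≤
      1 / N ^ 2 * (1 / 2) ^ ∑ i, j i := by
  have hzero : ∀ k ∈ Finset.range N, tentProd j m (digitalSeq d E k) = 0 := fun k hk =>
    hE.tentProd_digitalSeq_eq_zero ((Finset.mem_range.1 hk).trans_le hNn) hi
  have hlevel : (1 / 2 : ℝ) ^ ∑ i, j i ≤ 1 / N ^ 2 := by
    have hj : 2 * n ≤ ∑ i, j i :=
      hi.trans (Finset.single_le_sum_of_canonicallyOrdered (Finset.mem_univ i))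
    have hN' : (N : ℝ) ≤ 2 ^ n := by exact_mod_cast hNn
    rw [one_div_pow]
    gcongr
    calc (N : ℝ) ^ 2 ≤ (2 ^ n) ^ 2 := by gcongr
      _ = 2 ^ (2 * n) := by rw [← pow_mul, mul_comm]
      _ ≤ 2 ^ ∑ i, j i := by gcongr; norm_num
  have hd : ((1 / 4 : ℝ) ^ d) ^ 2 ≤ 1 :=
    pow_le_one₀ (by positivity) (pow_le_one₀ (by norm_num) (by norm_num))
  rw [four_pow_mul_haarCoeff_discSeq_sq _ hN hm, Finset.sum_sub_distrib,
    Finset.sum_eq_zero hzero, Finset.sum_const, Finset.card_range, nsmul_eq_mul, zero_sub,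
    neg_div, neg_sq, mul_div_cancel_left₀ _ (by exact_mod_cast hN)]
  calc ((1 / 2 : ℝ) ^ (∑ i, j i) * (1 / 4) ^ d) ^ 2 =
        (1 / 2) ^ (∑ i, j i) * (1 / 2) ^ (∑ i, j i) * ((1 / 4) ^ d) ^ 2 := by ring
    _ ≤ 1 / (N : ℝ) ^ 2 * (1 / 2) ^ (∑ i, j i) * 1 := by gcongr
    _ = _ := mul_one _

lemma bmoNorm_discSeq_digitalSeq_le (hE : IsOrderSeq 2 t d E) (hE' : Triangular2 d E) (hN : N ≠ 0)
    (hNn : N ≤ 2 ^ n) :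
    bmoNorm d (discSeq d (digitalSeq d E) N) ≤
      ENNReal.ofReal √((2 * n) ^ d * ((9 * 2 ^ d + 2) * 2 ^ t / N) ^ 2 + 1 / N ^ 2 * 2 ^ d) := by
  have hsum := ((hasSum_ite_forall_lt d (2 * n)).mul_right
    (((9 * 2 ^ d + 2) * 2 ^ t / N : ℝ) ^ 2)).add
    ((hasSum_one_half_pow_sum d).mul_left (1 / N ^ 2 : ℝ))
  push_cast at hsum
  refine bmoNorm_le_of_hasSum hsum fun j m hm => ?_
  split_ifs with hj
  · rw [one_mul]
    exact (hE.four_pow_mul_haarCoeff_sq_le hN hm).trans (le_add_of_nonneg_right (by positivity))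
  · obtain ⟨i, hi⟩ := not_forall.1 hj
    rw [zero_mul, zero_add]
    exact hE'.four_pow_mul_haarCoeff_sq_le hN hNn hm (not_lt.1 hi)

end Discrepancy

lemma two_mul_natLog_two_add_one_le {N : ℕ} (hN : 2 ≤ N) :
    2 * ((Nat.log 2 N + 1 : ℕ) : ℝ) ≤ 8 * Real.log N := by
  have hone : 1 ≤ Nat.log 2 N := Nat.log_pos one_lt_two hN
  have hlog : Nat.log 2 N * Real.log 2 ≤ Real.log N := by
    rw [← Real.log_pow]
    exact Real.log_le_log (by positivity) (by exact_mod_cast Nat.pow_log_le_self 2 (by omega))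
  have hone' : (1 : ℝ) ≤ Nat.log 2 N := by exact_mod_cast hone
  push_cast
  nlinarith [Real.log_two_gt_d9]

/-- For every order `2` digital `(t,d)`-sequence over `𝔽₂` whose generating
matrices satisfy `e_{i,k,ℓ} = 0` for `k > 2ℓ`, one has
`‖D^N | bmo^d‖ ≤ C_d · 2^t · N⁻¹ (log N)^{d/2}` for all `N ≥ 2`. -/
theorem bmo_discrepancy_upper_bound (d : ℕ) (hd : 0 < d) :
    ∃ C : ℝ, 0 < C ∧ ∀ (t : ℕ) (E : Fin d → ℕ → ℕ → ZMod 2),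
      IsOrderSeq 2 t d E → Triangular2 d E →
      ∀ N : ℕ, 2 ≤ N →
        bmoNorm d (discSeq d (digitalSeq d E) N) ≤
          ENNReal.ofReal (C * 2 ^ t * Real.log N ^ ((d:ℝ)/2) / N) := by
  set D : ℝ := 9 * 2 ^ d + 2
  refine ⟨√(8 ^ d * (D ^ 2 + 1)), by positivity, fun t E hE hE' N hN => ?_⟩
  have hN₀ : N ≠ 0 := by omega
  refine (bmoNorm_discSeq_digitalSeq_le hE hE' hN₀
    (Nat.lt_pow_succ_log_self one_lt_two N).le).trans (ENNReal.ofReal_le_ofReal ?_)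
  have hlog := two_mul_natLog_two_add_one_le hN
  have hlog_two : 2 ≤ 8 * Real.log N := le_trans (by norm_num) hlog
  have hlog_nonneg : 0 ≤ Real.log N := Real.log_natCast_nonneg N
  rw [Real.rpow_div_two_eq_sqrt _ hlog_nonneg, Real.rpow_natCast]
  refine Real.sqrt_le_iff.2 ⟨by positivity, ?_⟩
  calc (2 * ((Nat.log 2 N + 1 : ℕ) : ℝ)) ^ d * (D * 2 ^ t / N) ^ 2 + 1 / N ^ 2 * 2 ^ d
      ≤ (8 * Real.log N) ^ d * (D * 2 ^ t / N) ^ 2 +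
          (2 ^ t) ^ 2 / N ^ 2 * (8 * Real.log N) ^ d := by
        gcongr
        exact one_le_pow₀ (one_le_pow₀ one_le_two)
    _ = 8 ^ d * (D ^ 2 + 1) * (2 ^ t) ^ 2 * Real.log N ^ d / N ^ 2 := by ring
    _ = (√(8 ^ d * (D ^ 2 + 1)) * 2 ^ t * √(Real.log N) ^ d / N) ^ 2 := by
        rw [div_pow, mul_pow, mul_pow, Real.sq_sqrt (by positivity), pow_right_comm √(Real.log N),
          Real.sq_sqrt hlog_nonneg]

end
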